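/- arXiv:2605.07664 — 2 statements merged into one kernel-verified Lean document; each statement's English description precedes it below -/
import Mathlib

section
/- For every series-reduced finite tree T with |T| ≥ 2, the subtree density D(T) lies in the interval [1/2,3/4]; moreover, the set of values {D(T) : T a series-reduced finite tree with |T| ≥ 2} is dense in [1/2,3/4]. -/
/-- A subtree of a graph: a nonempty set of vertices inducing a connected subgraph. -/
def IsSubtree {V : Type*} (G : SimpleGraph V) (S : Finset V) : Prop :=
  S.Nonempty ∧ (G.induce (S : Set V)).Connected

/-- `N(T)`: the number of subtrees. -/
noncomputable def numSubtrees {V : Type*} [Fintype V] (G : SimpleGraph V) : ℕ :=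
  Nat.card {S : Finset V // IsSubtree G S}

/-- `R(T) = Σ_S |S|`: the total number of vertices over all subtrees. -/
noncomputable def totalSubtreeOrder {V : Type*} [Fintype V] (G : SimpleGraph V) : ℕ :=
  ∑ S ∈ (Set.toFinite {S : Finset V | IsSubtree G S}).toFinset, S.card

/-- `μ(T)`: the average subtree order. -/
noncomputable def avgSubtreeOrder {V : Type*} [Fintype V] (G : SimpleGraph V) : ℝ :=
  (totalSubtreeOrder G : ℝ) / (numSubtrees G : ℝ)

/-- `D(T) = μ(T)/|T|`: the subtree density. -/
noncomputable def subtreeDensity {V : Type*} [Fintype V] (G : SimpleGraph V) : ℝ :=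
  avgSubtreeOrder G / (Fintype.card V : ℝ)

/-- A graph is series-reduced if no vertex has degree 2. -/
def SeriesReduced {V : Type*} (G : SimpleGraph V) : Prop :=
  ∀ v : V, Nat.card (G.neighborSet v) ≠ 2

/-!
Root a tree at a leaf and build it by repeatedly joining two rooted trees by an edge between their
roots. The polynomials counting all subtrees, and those through the root, by order satisfy a
recursion under this operation, so the density of a series-reduced tree can be studied by induction.

For the lower bound, the induction also carries that more than half of the subtrees contain the
root, and that the average order of those exceeds half the order of the tree by at least `1/2`. For
the upper bound, a subtree misses on average at least half of the leaves other than the root, and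
these make up at least half of the vertices of a series-reduced tree.

Density follows by taking a star with `L` leaves and extending it at its centre by a path of `j`
vertices carrying one leaf each: a typical subtree contains half of all the leaves, and also the
whole path once `L` is large, so the average order is about `(L + 3 j) / 2` out of `L + 2 j`
vertices, and the ratios `(L + 3 j) / (2 (L + 2 j))` are dense in `[1/2, 3/4]`.
-/

open Finset Polynomial Filter Topology

/-! ### Subtrees -/

section IsSubtree

variable {V W : Type*} {G : SimpleGraph V} {H : SimpleGraph W} {S T : Finset V}

theorem IsSubtree.image [DecidableEq W] (hS : IsSubtree G S) {f : V → W}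
    (hf : ∀ x ∈ S, ∀ y ∈ S, G.Adj x y → f x = f y ∨ H.Adj (f x) (f y)) :
    IsSubtree H (S.image f) := by
  let g (x : (S : Set V)) : (S.image f : Set W) := ⟨f x, mem_image_of_mem f x.2⟩
  have : Nonempty (S.image f : Set W) := (hS.1.image f).to_subtype
  refine ⟨hS.1.image f, ⟨?_⟩⟩
  rintro ⟨x', hx'⟩ ⟨y', hy'⟩
  obtain ⟨x, hx, rfl⟩ := mem_image.1 hx'
  obtain ⟨y, hy, rfl⟩ := mem_image.1 hy'
  have hxy := hS.2.preconnected ⟨x, hx⟩ ⟨y, hy⟩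
  rw [SimpleGraph.reachable_iff_reflTransGen] at hxy ⊢
  refine hxy.lift' g fun u v huv => ?_
  rcases hf u u.2 v v.2 huv with heq | hadj
  · have hguv : g u = g v := Subtype.ext heq
    rw [Function.onFun, hguv]
  · exact .single hadj

theorem IsSubtree.union [DecidableEq V] (hS : IsSubtree G S) (hT : IsSubtree G T) {x y : V}
    (hx : x ∈ S) (hy : y ∈ T) (hxy : G.Adj x y) : IsSubtree G (S ∪ T) := by
  refine ⟨hS.1.mono subset_union_left, ?_⟩
  rw [coe_union]
  exact SimpleGraph.connected_induce_union hS.2.preconnected hT.2.preconnected hx hy hxy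

theorem IsSubtree.exists_adj_of_mem_of_notMem (hS : IsSubtree G S) (P : Set V) {x y : V}
    (hx : x ∈ S) (hxP : x ∈ P) (hy : y ∈ S) (hyP : y ∉ P) :
    ∃ u ∈ S, ∃ v ∈ S, u ∈ P ∧ v ∉ P ∧ G.Adj u v := by
  obtain ⟨p⟩ := hS.2.preconnected ⟨x, hx⟩ ⟨y, hy⟩
  obtain ⟨d, -, hfst, hsnd⟩ := p.exists_boundary_dart (Subtype.val ⁻¹' P) hxP hyP
  exact ⟨d.fst, d.fst.2, d.snd, d.snd.2, hfst, hsnd, d.adj⟩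

theorem isSubtree_univ_iff [Fintype V] : IsSubtree G univ ↔ G.Connected := by
  rw [IsSubtree, coe_univ, (SimpleGraph.induceUnivIso G).connected_iff]
  exact ⟨fun h => h.2, fun h => ⟨univ_nonempty_iff.2 h.nonempty, h⟩⟩

theorem isSubtree_map_iff (e : G ≃g H) :
    IsSubtree H (S.map e.toEquiv.toEmbedding) ↔ IsSubtree G S := by
  classical
  rw [map_eq_image]
  refine ⟨fun h => ?_, fun h => h.image fun x _ y _ hxy => .inr (e.map_adj_iff.2 hxy)⟩
  have := h.image (f := e.symm) fun x _ y _ hxy => .inr (e.symm.map_adj_iff.2 hxy)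
  have hcomp : e.symm ∘ e.toEquiv.toEmbedding = id := funext e.symm_apply_apply
  rwa [image_image, hcomp, image_id] at this

end IsSubtree

/-! ### Joining two graphs by an edge -/

/-- The disjoint union of `G` and `H` together with an edge between the vertex `r` of `G` and the
vertex `w` of `H`. -/
def edgeJoin {V W : Type*} (G : SimpleGraph V) (r : V) (H : SimpleGraph W) (w : W) :
    SimpleGraph (V ⊕ W) :=
  (G ⊕g H) ⊔ SimpleGraph.edge (.inl r) (.inr w)

section EdgeJoin

variable {V W : Type*} {G : SimpleGraph V} {r : V} {H : SimpleGraph W} {w : W}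

@[simp]
theorem edgeJoin_adj_inl_inl {x y : V} : (edgeJoin G r H w).Adj (.inl x) (.inl y) ↔ G.Adj x y := by
  simp [edgeJoin, SimpleGraph.edge_adj]

@[simp]
theorem edgeJoin_adj_inr_inr {x y : W} : (edgeJoin G r H w).Adj (.inr x) (.inr y) ↔ H.Adj x y := by
  simp [edgeJoin, SimpleGraph.edge_adj]

@[simp]
theorem edgeJoin_adj_inl_inr {x : V} {y : W} :
    (edgeJoin G r H w).Adj (.inl x) (.inr y) ↔ x = r ∧ y = w := by
  simp [edgeJoin, SimpleGraph.edge_adj]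

@[simp]
theorem edgeJoin_adj_inr_inl {x : W} {y : V} :
    (edgeJoin G r H w).Adj (.inr x) (.inl y) ↔ x = w ∧ y = r := by
  simp [edgeJoin, SimpleGraph.edge_adj]

theorem IsSubtree.of_edgeJoin_left {S : Finset V} {T : Finset W}
    (h : IsSubtree (edgeJoin G r H w) (S.disjSum T)) (hT : T = ∅ ∨ r ∈ S) :
    IsSubtree G S := by
  classical
  have himage : (S.disjSum T).image (Sum.elim id fun _ => r) = S := by
    ext x
    rcases hT with rfl | hr
    · simp
    · aesop
  rw [← himage]
  refine h.image ?_
  rintro (x | x) - (y | y) - hxy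
  · exact .inr (edgeJoin_adj_inl_inl.1 hxy)
  · exact .inl (edgeJoin_adj_inl_inr.1 hxy).1
  · exact .inl (edgeJoin_adj_inr_inl.1 hxy).2.symm
  · exact .inl rfl

theorem IsSubtree.of_edgeJoin_right {S : Finset V} {T : Finset W}
    (h : IsSubtree (edgeJoin G r H w) (S.disjSum T)) (hS : S = ∅ ∨ w ∈ T) : IsSubtree H T := by
  classical
  have himage : (S.disjSum T).image (Sum.elim (fun _ => w) id) = T := by
    ext x
    rcases hS with rfl | hw
    · simp
    · aesop
  rw [← himage]
  refine h.image ?_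
  rintro (x | x) - (y | y) - hxy
  · exact .inl rfl
  · exact .inl (edgeJoin_adj_inl_inr.1 hxy).2.symm
  · exact .inl (edgeJoin_adj_inr_inl.1 hxy).1
  · exact .inr (edgeJoin_adj_inr_inr.1 hxy)

theorem IsSubtree.mem_of_edgeJoin {S : Finset V} {T : Finset W}
    (h : IsSubtree (edgeJoin G r H w) (S.disjSum T)) (hS : S.Nonempty) (hT : T.Nonempty) :
    r ∈ S ∧ w ∈ T := by
  obtain ⟨x, hx⟩ := hS
  obtain ⟨y, hy⟩ := hT
  obtain ⟨u, hu, v, hv, ⟨a, rfl⟩, hvl, huv⟩ := h.exists_adj_of_mem_of_notMem (Set.range Sum.inl)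
    (inl_mem_disjSum.2 hx) ⟨x, rfl⟩ (inr_mem_disjSum.2 hy) (by simp)
  rcases v with b | b
  · exact absurd ⟨b, rfl⟩ hvl
  · obtain ⟨rfl, rfl⟩ := edgeJoin_adj_inl_inr.1 huv
    exact ⟨inl_mem_disjSum.1 hu, inr_mem_disjSum.1 hv⟩

theorem IsSubtree.disjSum_empty {S : Finset V} (hS : IsSubtree G S) :
    IsSubtree (edgeJoin G r H w) (S.disjSum ∅) := by
  classical
  rw [Finset.disjSum_empty, map_eq_image]
  exact hS.image fun x _ y _ hxy => .inr (edgeJoin_adj_inl_inl.2 hxy)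

theorem IsSubtree.empty_disjSum {T : Finset W} (hT : IsSubtree H T) :
    IsSubtree (edgeJoin G r H w) (Finset.disjSum ∅ T) := by
  classical
  rw [Finset.empty_disjSum, map_eq_image]
  exact hT.image fun x _ y _ hxy => .inr (edgeJoin_adj_inr_inr.2 hxy)

theorem isSubtree_edgeJoin_iff {S : Finset V} {T : Finset W} :
    IsSubtree (edgeJoin G r H w) (S.disjSum T) ↔
      IsSubtree G S ∧ T = ∅ ∨ S = ∅ ∧ IsSubtree H T ∨
        (IsSubtree G S ∧ r ∈ S) ∧ (IsSubtree H T ∧ w ∈ T) := by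
  classical
  constructor
  · intro h
    rcases T.eq_empty_or_nonempty with hT | hT
    · exact .inl ⟨h.of_edgeJoin_left (.inl hT), hT⟩
    rcases S.eq_empty_or_nonempty with hS | hS
    · exact .inr (.inl ⟨hS, h.of_edgeJoin_right (.inl hS)⟩)
    obtain ⟨hr, hw⟩ := h.mem_of_edgeJoin hS hT
    exact .inr (.inr ⟨⟨h.of_edgeJoin_left (.inr hr), hr⟩, h.of_edgeJoin_right (.inr hw), hw⟩)
  · rintro (⟨hS, rfl⟩ | ⟨rfl, hT⟩ | ⟨⟨hS, hr⟩, hT, hw⟩)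
    · exact hS.disjSum_empty
    · exact hT.empty_disjSum
    · have hunion : S.disjSum T = S.disjSum ∅ ∪ Finset.disjSum ∅ T := by
        ext (x | x) <;> simp
      rw [hunion]
      exact hS.disjSum_empty.union hT.empty_disjSum (inl_mem_disjSum.2 hr) (inr_mem_disjSum.2 hw)
        (edgeJoin_adj_inl_inr.2 ⟨rfl, rfl⟩)

theorem connected_edgeJoin_iff [Finite V] [Finite W] :
    (edgeJoin G r H w).Connected ↔ G.Connected ∧ H.Connected := by
  cases nonempty_fintype V
  cases nonempty_fintype W
  have : Nonempty V := ⟨r⟩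
  have : Nonempty W := ⟨w⟩
  rw [← isSubtree_univ_iff, ← isSubtree_univ_iff, ← isSubtree_univ_iff, ← univ_disjSum_univ,
    isSubtree_edgeJoin_iff]
  simp [univ_nonempty.ne_empty]

theorem edgeSet_edgeJoin :
    (edgeJoin G r H w).edgeSet = insert s(.inl r, .inr w) (G ⊕g H).edgeSet := by
  rw [edgeJoin, SimpleGraph.edgeSet_sup, SimpleGraph.edgeSet_edge_of_ne Sum.inl_ne_inr,
    Set.union_comm, Set.singleton_union]

theorem isTree_edgeJoin [Finite V] [Finite W] (hG : G.IsTree) (hH : H.IsTree) :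
    (edgeJoin G r H w).IsTree := by
  rw [SimpleGraph.isTree_iff_connected_and_card] at hG hH ⊢
  refine ⟨connected_edgeJoin_iff.2 ⟨hG.1, hH.1⟩, ?_⟩
  have hcard : Nat.card (edgeJoin G r H w).edgeSet = Nat.card (G ⊕g H).edgeSet + 1 := by
    rw [edgeSet_edgeJoin, Nat.card_coe_set_eq, Nat.card_coe_set_eq]
    exact Set.ncard_insert_of_notMem (by simp)
  rw [hcard, Nat.card_congr SimpleGraph.edgeSetSumEquiv, Nat.card_sum, Nat.card_sum, ← hG.2, ← hH.2]
  ring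

open scoped Classical in
theorem card_neighborSet_edgeJoin_inl [Finite V] [Finite W] (x : V) :
    Nat.card ((edgeJoin G r H w).neighborSet (.inl x)) =
      Nat.card (G.neighborSet x) + if x = r then 1 else 0 := by
  rw [Nat.card_coe_set_eq, Nat.card_coe_set_eq, ←
    Set.ncard_image_of_injective (G.neighborSet x) (f := (Sum.inl : _ → V ⊕ W)) Sum.inl_injective]
  split_ifs with h
  · rw [← Set.ncard_insert_of_notMem (a := (.inr w : V ⊕ W)) (by simp)]
    congr 1
    ext (y | y) <;> simp [h]
  · congr 1
    ext (y | y) <;> simp [h]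

open scoped Classical in
theorem card_neighborSet_edgeJoin_inr [Finite V] [Finite W] (x : W) :
    Nat.card ((edgeJoin G r H w).neighborSet (.inr x)) =
      Nat.card (H.neighborSet x) + if x = w then 1 else 0 := by
  rw [Nat.card_coe_set_eq, Nat.card_coe_set_eq, ←
    Set.ncard_image_of_injective (H.neighborSet x) (f := (Sum.inr : _ → V ⊕ W)) Sum.inr_injective]
  split_ifs with h
  · rw [← Set.ncard_insert_of_notMem (a := (.inl r : V ⊕ W)) (by simp)]
    congr 1
    ext (y | y) <;> simp [h]
  · congr 1
    ext (y | y) <;> simp [h]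

/-- Joining isomorphic graphs at corresponding vertices gives isomorphic graphs. -/
def edgeJoinCongr {V' W' : Type*} {G' : SimpleGraph V'} {H' : SimpleGraph W'} {r' : V'} {w' : W'}
    (e : G ≃g G') (f : H ≃g H') (hr : e r = r') (hw : f w = w') :
    edgeJoin G r H w ≃g edgeJoin G' r' H' w' where
  toEquiv := e.toEquiv.sumCongr f.toEquiv
  map_rel_iff' := by
    subst hr hw
    rintro (x | x) (y | y) <;> simp [e.map_adj_iff, f.map_adj_iff]

/-- A graph cut into two parts by a single edge is the join of these parts along that edge. -/
def edgeJoinIsoOfCut {s : Set V} {r w : V} (hr : r ∈ s) (hw : w ∈ sᶜ)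
    (hcut : ∀ x ∈ s, ∀ y ∈ sᶜ, G.Adj x y ↔ x = r ∧ y = w) [DecidablePred (· ∈ s)] :
    edgeJoin (G.induce s) ⟨r, hr⟩ (G.induce sᶜ) ⟨w, hw⟩ ≃g G where
  toEquiv := Equiv.Set.sumCompl s
  map_rel_iff' := by
    rintro (x | x) (y | y)
    · simp
    · simpa [Subtype.ext_iff] using hcut x x.2 y y.2
    · simpa [Subtype.ext_iff, SimpleGraph.adj_comm, and_comm] using hcut y y.2 x x.2
    · simp

end EdgeJoin

theorem exists_cut_of_isAcyclic {V : Type*} {G : SimpleGraph V} (hG : G.IsAcyclic) {r w : V}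
    (hrw : G.Adj r w) :
    ∃ s : Set V, r ∈ s ∧ w ∈ sᶜ ∧ ∀ x ∈ s, ∀ y ∈ sᶜ, G.Adj x y ↔ x = r ∧ y = w := by
  have hbridge : ¬(G.deleteEdges {s(r, w)}).Reachable r w :=
    SimpleGraph.isBridge_iff.1 (SimpleGraph.isAcyclic_iff_forall_adj_isBridge.1 hG hrw)
  refine ⟨{x | (G.deleteEdges {s(r, w)}).Reachable r x}, .refl r, hbridge, fun x hx y hy =>
    ⟨fun hxy => ?_, ?_⟩⟩
  · by_contra hne
    refine hy (hx.trans (SimpleGraph.Adj.reachable ?_))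
    refine SimpleGraph.deleteEdges_adj.2 ⟨hxy, fun h => ?_⟩
    rcases Sym2.eq_iff.1 h with h | ⟨rfl, rfl⟩
    · exact hne h
    · exact hbridge hx
  · rintro ⟨rfl, rfl⟩
    exact hrw

/-! ### Subtree polynomials -/

theorem not_isSubtree_empty {V : Type*} {G : SimpleGraph V} : ¬IsSubtree G ∅ :=
  fun h => not_nonempty_empty h.1

open scoped Classical in
/-- The generating polynomial of the subtrees of a graph by order. -/
noncomputable def subtreePoly {V : Type*} [Fintype V] (G : SimpleGraph V) : ℕ[X] :=
  ∑ S with IsSubtree G S, X ^ #S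

open scoped Classical in
/-- The generating polynomial of the subtrees containing a given vertex by order. -/
noncomputable def rootedSubtreePoly {V : Type*} [Fintype V] (G : SimpleGraph V) (r : V) : ℕ[X] :=
  ∑ S with IsSubtree G S ∧ r ∈ S, X ^ #S

section SubtreePoly

variable {V W : Type*} [Fintype V] [Fintype W] {G : SimpleGraph V} {H : SimpleGraph W}

theorem eval_one_subtreePoly (G : SimpleGraph V) : (subtreePoly G).eval 1 = numSubtrees G := by
  classical
  simp [subtreePoly, numSubtrees, eval_finsetSum, Fintype.card_subtype]

theorem eval_one_derivative_subtreePoly (G : SimpleGraph V) :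
    (derivative (subtreePoly G)).eval 1 = totalSubtreeOrder G := by
  classical
  simp [subtreePoly, totalSubtreeOrder, eval_finsetSum, derivative_X_pow]

theorem subtreePoly_congr (e : G ≃g H) : subtreePoly G = subtreePoly H := by
  classical
  simp only [subtreePoly, sum_filter]
  refine Fintype.sum_equiv e.toEquiv.finsetCongr _ _ fun S => ?_
  simp [isSubtree_map_iff]

theorem isSubtree_iff_of_unique [Unique V] {S : Finset V} : IsSubtree G S ↔ S = univ := by
  refine ⟨fun h => h.1.eq_univ, ?_⟩
  rintro rfl
  exact isSubtree_univ_iff.2 SimpleGraph.IsTree.of_subsingleton.connected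

theorem subtreePoly_of_unique [Unique V] : subtreePoly G = X := by
  classical
  simp [subtreePoly, isSubtree_iff_of_unique, filter_eq']

theorem rootedSubtreePoly_of_unique [Unique V] (r : V) : rootedSubtreePoly G r = X := by
  classical
  simp [rootedSubtreePoly, isSubtree_iff_of_unique, filter_and, filter_eq',
    Unique.eq_default r]

variable {r : V} {w : W}

theorem sum_univ_disjSum {M : Type*} [AddCommMonoid M] (f : Finset (V ⊕ W) → M) :
    ∑ S, f S = ∑ S : Finset V, ∑ T : Finset W, f (S.disjSum T) := by
  rw [← Fintype.sum_prod_type']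
  exact (Fintype.sum_equiv sumEquiv.symm.toEquiv _ _ fun p => rfl).symm

theorem subtreePoly_edgeJoin :
    subtreePoly (edgeJoin G r H w) =
      subtreePoly G + subtreePoly H + rootedSubtreePoly G r * rootedSubtreePoly H w := by
  classical
  have hterm (S : Finset V) (T : Finset W) :
      (if IsSubtree (edgeJoin G r H w) (S.disjSum T) then (X : ℕ[X]) ^ #(S.disjSum T) else 0) =
        (if T = ∅ then if IsSubtree G S then X ^ #S else 0 else 0) +
        (if S = ∅ then if IsSubtree H T then X ^ #T else 0 else 0) +
        (if IsSubtree G S ∧ r ∈ S then X ^ #S else 0) *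
          (if IsSubtree H T ∧ w ∈ T then X ^ #T else 0) := by
    rw [isSubtree_edgeJoin_iff, card_disjSum, ite_zero_mul_ite_zero, pow_add]
    rcases S.eq_empty_or_nonempty with rfl | hS <;> rcases T.eq_empty_or_nonempty with rfl | hT
    · simp [not_isSubtree_empty]
    · simp [not_isSubtree_empty, hT.ne_empty]
    · simp [not_isSubtree_empty, hS.ne_empty]
    · simp [hS.ne_empty, hT.ne_empty]
  simp only [subtreePoly, rootedSubtreePoly, sum_filter, sum_univ_disjSum, hterm, sum_add_distrib,
    sum_mul_sum]
  simp

theorem rootedSubtreePoly_edgeJoin_inl :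
    rootedSubtreePoly (edgeJoin G r H w) (.inl r) =
      rootedSubtreePoly G r * (1 + rootedSubtreePoly H w) := by
  classical
  have hterm (S : Finset V) (T : Finset W) :
      (if IsSubtree (edgeJoin G r H w) (S.disjSum T) ∧ r ∈ S then (X : ℕ[X]) ^ #(S.disjSum T)
          else 0) =
        (if IsSubtree G S ∧ r ∈ S then X ^ #S else 0) * ((if T = ∅ then 1 else 0) +
          (if IsSubtree H T ∧ w ∈ T then X ^ #T else 0)) := by
    rw [isSubtree_edgeJoin_iff, card_disjSum, mul_add, ite_zero_mul_ite_zero,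
      ite_zero_mul_ite_zero, pow_add]
    rcases T.eq_empty_or_nonempty with rfl | hT
    · simp [not_isSubtree_empty]
    · rcases S.eq_empty_or_nonempty with rfl | hS
      · simp
      · simp [hS.ne_empty, hT.ne_empty, and_right_comm, and_assoc]
  simp only [rootedSubtreePoly, sum_filter, sum_univ_disjSum, inl_mem_disjSum, hterm, ← mul_sum,
    ← sum_mul, sum_add_distrib]
  simp

end SubtreePoly

/-! ### Plane trees -/

/-- Finite plane rooted trees: `graft t u` attaches the root of `u` as a further child of the root
of `t`, so that every tree is built from its root by adding the branches one after another. -/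
inductive PlaneTree
  | single : PlaneTree
  | graft : PlaneTree → PlaneTree → PlaneTree

namespace PlaneTree

/-- The number of children of the root. -/
def deg : PlaneTree → ℕ
  | single => 0
  | graft t _ => t.deg + 1

/-- The number of vertices. -/
def size : PlaneTree → ℕ
  | single => 1
  | graft t u => t.size + u.size

/-- The number of subtrees containing the root. -/
def rootCount : PlaneTree → ℕ
  | single => 1
  | graft t u => t.rootCount * (1 + u.rootCount)

/-- The total order of the subtrees containing the root. -/
def rootTotal : PlaneTree → ℕ
  | single => 1
  | graft t u => t.rootTotal * (1 + u.rootCount) + t.rootCount * u.rootTotal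

/-- The number of subtrees. -/
def count : PlaneTree → ℕ
  | single => 1
  | graft t u => t.count + u.count + t.rootCount * u.rootCount

/-- The total order of the subtrees. -/
def total : PlaneTree → ℕ
  | single => 1
  | graft t u => t.total + u.total + (t.rootTotal * u.rootCount + t.rootCount * u.rootTotal)

/-- No vertex other than the root has degree 2, that is, exactly one child. -/
def Good : PlaneTree → Prop
  | single => True
  | graft t u => t.Good ∧ u.Good ∧ u.deg ≠ 1

/-- The tree obtained by placing a new root above the root of `t`. -/
def plant (t : PlaneTree) : PlaneTree := graft single t

/-- The tree obtained by placing a new root, which also carries a leaf, above the root of `t`. -/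
def extend (t : PlaneTree) : PlaneTree := graft (plant single) t

theorem eq_single_of_deg_eq_zero {t : PlaneTree} (h : t.deg = 0) : t = single := by
  cases t with
  | single => rfl
  | graft t u => simp [deg] at h

theorem exists_eq_plant_of_deg_eq_one {t : PlaneTree} (h : t.deg = 1) : ∃ u, t = plant u := by
  cases t with
  | single => simp [deg] at h
  | graft t u =>
    obtain rfl : t = single := eq_single_of_deg_eq_zero (by simpa [deg] using h)
    exact ⟨u, rfl⟩

theorem size_pos (t : PlaneTree) : 0 < t.size := by
  induction t with
  | single => exact one_pos
  | graft t u iht _ => exact Nat.add_pos_left iht _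

theorem rootCount_pos (t : PlaneTree) : 0 < t.rootCount := by
  induction t with
  | single => exact one_pos
  | graft t u iht _ => exact Nat.mul_pos iht (by omega)

theorem rootCount_le_count (t : PlaneTree) : t.rootCount ≤ t.count := by
  induction t with
  | single => exact le_rfl
  | graft t u iht ihu =>
    rw [rootCount, count, mul_add, mul_one]
    omega

/-! ### The lower density bound -/

/-- Twice the total order of the subtrees containing the root, in excess of what it would be if
their average order were half the order of the tree. -/
def rootExcess (t : PlaneTree) : ℤ := 2 * t.rootTotal - t.size * t.rootCount

/-- Twice the total order of the subtrees, in excess of what it would be if their average order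
were half the order of the tree. -/
def excess (t : PlaneTree) : ℤ := 2 * t.total - t.size * t.count

theorem rootExcess_single : single.rootExcess = 1 := rfl

theorem excess_single : single.excess = 1 := rfl

theorem rootExcess_graft (t u : PlaneTree) :
    (graft t u).rootExcess =
      t.rootExcess * (1 + u.rootCount) + t.rootCount * (u.rootExcess - u.size) := by
  simp only [rootExcess, rootTotal, size, rootCount]
  push_cast
  ring

theorem excess_graft (t u : PlaneTree) :
    (graft t u).excess = t.excess - u.size * t.count + (u.excess - t.size * u.count) +
      (t.rootExcess * u.rootCount + t.rootCount * u.rootExcess) := by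
  simp only [excess, rootExcess, total, size, count]
  push_cast
  ring

/-- The invariant behind the lower density bound. It holds for every good tree whose root has at
least two children, and it is stable under attaching further branches to the root. -/
structure Balanced (t : PlaneTree) : Prop where
  four_le_rootCount : 4 ≤ t.rootCount
  size_le : 4 * t.size ≤ 3 * t.rootCount
  count_le : t.count + 2 ≤ 2 * t.rootCount
  rootCount_le : t.rootCount ≤ t.rootExcess
  plant_nonneg : 0 ≤ (plant t).excess
  plant_extend_nonneg : 0 ≤ (plant (extend t)).excess

namespace Balanced

theorem extend_single : (extend single).Balanced := by
  constructor <;> decide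

variable {t u : PlaneTree}

theorem graft_single (ht : t.Balanced) : (graft t single).Balanced := by
  obtain ⟨h₁, h₂, h₃, h₄, h₅, h₆⟩ := ht
  constructor <;> simp only [plant, extend, excess_graft, rootExcess_graft,
    excess_single, rootExcess_single, size, rootCount, count] at * <;> push_cast at * <;> omega

theorem graft_plant_single (ht : t.Balanced) : (graft (plant t) single).Balanced := by
  obtain ⟨h₁, h₂, h₃, h₄, h₅, h₆⟩ := ht
  constructor <;> simp only [plant, extend, excess_graft, rootExcess_graft,
    excess_single, rootExcess_single, size, rootCount, count] at * <;> push_cast at * <;> omega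

theorem extend (ht : t.Balanced) : (extend t).Balanced := by
  obtain ⟨h₁, h₂, h₃, h₄, h₅, h₆⟩ := ht
  constructor <;> simp only [plant, PlaneTree.extend, excess_graft, rootExcess_graft,
    excess_single, rootExcess_single, size, rootCount, count] at * <;> push_cast at * <;> omega

/-- Attaching a balanced branch changes the excesses by a combination of these products and of terms
linear in the invariants, so the remaining steps of the induction are linear in them. -/
theorem products_nonneg (ht : t.Balanced) (hu : u.Balanced) :
    (0 : ℤ) ≤ (t.rootExcess - t.rootCount) * (u.rootCount - 4) ∧
    (0 : ℤ) ≤ (3 * t.rootCount - 4 * t.size) * (u.rootCount - 4) ∧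
    (0 : ℤ) ≤ (2 * t.rootCount - t.count - 2) * u.size ∧
    (0 : ℤ) ≤ (t.rootCount - 4) * (u.rootCount - 4) := by
  obtain ⟨h₁, h₂, h₃, h₄, -, -⟩ := ht
  have := hu.four_le_rootCount
  refine ⟨?_, ?_, ?_, ?_⟩ <;> apply mul_nonneg <;> omega

theorem graft (ht : t.Balanced) (hu : u.Balanced) : (graft t u).Balanced := by
  obtain ⟨p₁, p₂, p₃, p₄⟩ := ht.products_nonneg hu
  obtain ⟨q₁, q₂, q₃, -⟩ := hu.products_nonneg ht
  obtain ⟨h₁, h₂, h₃, h₄, h₅, h₆⟩ := ht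
  obtain ⟨k₁, k₂, k₃, k₄, k₅, k₆⟩ := hu
  constructor <;> simp only [plant, PlaneTree.extend, excess_graft, rootExcess_graft,
    excess_single, rootExcess_single, size, rootCount, count] at * <;> push_cast at * <;>
    zify at h₁ h₂ h₃ k₁ k₂ k₃ ⊢ <;> linarith

theorem graft_plant (ht : t.Balanced) (hu : u.Balanced) :
    (PlaneTree.graft (plant t) u).Balanced := by
  obtain ⟨p₁, p₂, p₃, p₄⟩ := ht.products_nonneg hu
  obtain ⟨q₁, q₂, q₃, -⟩ := hu.products_nonneg ht
  obtain ⟨h₁, h₂, h₃, h₄, h₅, h₆⟩ := ht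
  obtain ⟨k₁, k₂, k₃, k₄, k₅, k₆⟩ := hu
  constructor <;> simp only [plant, PlaneTree.extend, excess_graft, rootExcess_graft,
    excess_single, rootExcess_single, size, rootCount, count] at * <;> push_cast at * <;>
    zify at h₁ h₂ h₃ k₁ k₂ k₃ ⊢ <;> linarith

end Balanced

theorem Good.eq_single_or_balanced {t : PlaneTree} (ht : t.Good) (hd : t.deg ≠ 1) :
    t = single ∨ t.Balanced := by
  match t with
  | single => exact .inl rfl
  | graft single u => exact absurd rfl hd
  | graft (graft single v) u =>
    obtain ⟨⟨-, hv, hdv⟩, hu, hdu⟩ := ht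
    right
    rcases hv.eq_single_or_balanced hdv with rfl | hv <;>
      rcases hu.eq_single_or_balanced hdu with rfl | hu
    · exact .extend_single
    · exact hu.extend
    · exact hv.graft_plant_single
    · exact hv.graft_plant hu
  | graft (graft (graft p q) v) u =>
    obtain ⟨ht, hu, hdu⟩ := ht
    have ht := (ht.eq_single_or_balanced (by simp [deg])).resolve_left nofun
    rcases hu.eq_single_or_balanced hdu with rfl | hu
    · exact .inr ht.graft_single
    · exact .inr (ht.graft hu)

theorem Good.excess_nonneg {t : PlaneTree} (ht : t.Good) (hd : t.deg = 1) : 0 ≤ t.excess := by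
  obtain ⟨u, rfl⟩ := exists_eq_plant_of_deg_eq_one hd
  obtain ⟨-, hu, hdu⟩ := ht
  rcases hu.eq_single_or_balanced hdu with rfl | hu
  · decide
  · exact hu.plant_nonneg

/-! ### The upper density bound -/

/-- The number of leaves, not counting the root. -/
def leafCount : PlaneTree → ℕ
  | single => 0
  | graft t u => t.leafCount + max 1 u.leafCount

theorem leafCount_lt_size (t : PlaneTree) : t.leafCount < t.size := by
  induction t with
  | single => exact one_pos
  | graft t u iht ihu => simp only [leafCount, size]; omega

theorem eq_single_or_leafCount_pos (t : PlaneTree) : t = single ∨ 0 < t.leafCount := by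
  cases t with
  | single => exact .inl rfl
  | graft t u => exact .inr (by simp only [leafCount]; omega)

theorem two_mul_rootTotal_add_le (t : PlaneTree) :
    2 * t.rootTotal + t.leafCount * t.rootCount ≤ 2 * t.size * t.rootCount := by
  induction t with
  | single => exact le_rfl
  | graft t u iht ihu =>
    have branch : 2 * u.rootTotal + max 1 u.leafCount * (1 + u.rootCount) ≤
        2 * u.size * (1 + u.rootCount) := by
      rcases u.eq_single_or_leafCount_pos with rfl | hu
      · exact le_rfl
      · rw [max_eq_right hu]
        linarith [u.leafCount_lt_size]
    simp only [rootTotal, leafCount, rootCount, size]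
    calc _ = (2 * t.rootTotal + t.leafCount * t.rootCount) * (1 + u.rootCount) +
          t.rootCount * (2 * u.rootTotal + max 1 u.leafCount * (1 + u.rootCount)) := by ring
      _ ≤ 2 * t.size * t.rootCount * (1 + u.rootCount) +
          t.rootCount * (2 * u.size * (1 + u.rootCount)) := by gcongr
      _ = _ := by ring

/-- A subtree avoids, on average, at least half of the leaves other than the root. -/
theorem two_mul_total_add_le (t : PlaneTree) :
    2 * t.total + t.leafCount * t.count ≤ 2 * t.size * t.count := by
  induction t with
  | single => decide
  | graft t u iht ihu =>
    have hRt := Nat.mul_le_mul_right u.rootCount t.two_mul_rootTotal_add_le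
    have hRu := Nat.mul_le_mul_left t.rootCount u.two_mul_rootTotal_add_le
    have ht := t.leafCount_lt_size
    have hu := u.leafCount_lt_size
    simp only [total, leafCount, count, size]
    rcases u.eq_single_or_leafCount_pos with rfl | hu₀
    · simp only [total, leafCount, count, size, rootTotal, rootCount] at *
      have := t.rootCount_le_count
      norm_num
      linarith
    · rw [max_eq_right hu₀]
      nlinarith [Nat.mul_le_mul_right t.count hu.le, Nat.mul_le_mul_right u.count ht.le]

theorem Good.size_add_deg_le {t : PlaneTree} (ht : t.Good) :
    t.size + t.deg ≤ 2 * t.leafCount + 1 := by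
  induction t with
  | single => exact le_rfl
  | graft t u iht ihu =>
    obtain ⟨ht, hu, hdu⟩ := ht
    have hbranch : u.size + 1 ≤ 2 * max 1 u.leafCount := by
      rcases eq_or_ne u.deg 0 with h | h
      · rw [eq_single_of_deg_eq_zero h]
        exact le_rfl
      · have := ihu hu
        omega
    have := iht ht
    simp only [size, deg, leafCount]
    omega

theorem Good.four_mul_total_le {t : PlaneTree} (ht : t.Good) (hd : t.deg = 1) :
    4 * t.total ≤ 3 * t.size * t.count := by
  have hsize : t.size ≤ 2 * t.leafCount := by
    have := ht.size_add_deg_le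
    omega
  linarith [t.two_mul_total_add_le, Nat.mul_le_mul_right t.count hsize]

/-! ### Caterpillars -/

/-- The tree whose root has `L` children, all of them leaves. -/
def star : ℕ → PlaneTree
  | 0 => single
  | L + 1 => graft (star L) single

/-- The star with `L` leaves, extended upwards by a path of `j` vertices carrying one leaf each. -/
def caterpillar (L : ℕ) : ℕ → PlaneTree
  | 0 => star L
  | j + 1 => extend (caterpillar L j)

theorem deg_star (L : ℕ) : (star L).deg = L := by
  induction L with
  | zero => rfl
  | succ L ih => rw [star, deg, ih]

theorem good_star (L : ℕ) : (star L).Good := by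
  induction L with
  | zero => trivial
  | succ L ih => exact ⟨ih, trivial, nofun⟩

theorem size_caterpillar (L j : ℕ) : (caterpillar L j).size = L + 2 * j + 1 := by
  induction j with
  | zero =>
    induction L with
    | zero => rfl
    | succ L ih => simp only [caterpillar, star, size] at ih ⊢; omega
  | succ j ih => simp only [caterpillar, extend, plant, size, ih]; omega

theorem leafCount_caterpillar {L : ℕ} (hL : 0 < L) (j : ℕ) :
    (caterpillar L j).leafCount = L + j := by
  induction j with
  | zero =>
    induction L, hL using Nat.le_induction with
    | base => rfl
    | succ L _ ih => simp only [caterpillar, star, leafCount] at ih ⊢; omega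
  | succ j ih => simp only [caterpillar, extend, plant, leafCount, ih]; omega

theorem good_plant_caterpillar {L : ℕ} (hL : L ≠ 1) (j : ℕ) : (plant (caterpillar L j)).Good := by
  refine ⟨trivial, ?_, ?_⟩
  · induction j with
    | zero => exact good_star L
    | succ j ih =>
      refine ⟨⟨trivial, trivial, nofun⟩, ih, ?_⟩
      cases j with
      | zero => exact (deg_star L).trans_ne hL
      | succ j => nofun
  · cases j with
    | zero => exact (deg_star L).trans_ne hL
    | succ j => nofun

/-- The average order of a subtree of `t`, and of one containing the root, is at least `M / 2` up to
lower-order terms. -/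
structure AveragesAtLeast (M : ℤ) (t : PlaneTree) : Prop where
  balanced : t.Balanced
  rootTotal_ge : M * t.rootCount + 2 * M + 6 ≤ 2 * t.rootTotal
  total_ge : M * t.count ≤ 2 * t.total + 6 * t.rootCount

namespace AveragesAtLeast

variable {M : ℤ} {t : PlaneTree}

theorem graft_single (ht : t.AveragesAtLeast M) (hM : 0 ≤ M) :
    (graft t single).AveragesAtLeast (M + 1) := by
  obtain ⟨hb, hR, hT⟩ := ht
  refine ⟨hb.graft_single, ?_, ?_⟩
  all_goals
    have := hb.count_le
    have := hb.four_le_rootCount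
    simp only [total, rootTotal, count, rootCount]
    push_cast
    linarith

theorem extend (ht : t.AveragesAtLeast M) (hM : 0 ≤ M) :
    (extend t).AveragesAtLeast (M + 3) := by
  obtain ⟨hb, hR, hT⟩ := ht
  refine ⟨hb.extend, ?_, ?_⟩
  all_goals
    have := hb.count_le
    simp only [PlaneTree.extend, plant, total, rootTotal, count, rootCount]
    push_cast
    linarith

end AveragesAtLeast

theorem averagesAtLeast_caterpillar {L : ℕ} (hL : 3 ≤ L) (j : ℕ) :
    (caterpillar L j).AveragesAtLeast (L + 3 * j) := by
  induction j with
  | zero =>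
    induction L, hL using Nat.le_induction with
    | base => exact ⟨Balanced.extend_single.graft_single, by decide, by decide⟩
    | succ L _ ih => simpa [caterpillar, star] using ih.graft_single (by positivity)
  | succ j ih =>
    have := ih.extend (by positivity)
    rwa [add_assoc, ← mul_add_one, ← Nat.cast_add_one] at this

theorem two_mul_total_plant_caterpillar_ge {L : ℕ} (hL : 3 ≤ L) (j : ℕ) :
    (L + 3 * j : ℤ) * (plant (caterpillar L j)).count ≤
      2 * (plant (caterpillar L j)).total + 6 * (plant (caterpillar L j)).count := by
  obtain ⟨-, hR, hT⟩ := averagesAtLeast_caterpillar hL j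
  simp only [plant, total, rootTotal, count, rootCount]
  push_cast
  linarith

theorem two_mul_total_plant_caterpillar_le {L : ℕ} (hL : 0 < L) (j : ℕ) :
    2 * (plant (caterpillar L j)).total ≤ (L + 3 * j + 4) * (plant (caterpillar L j)).count := by
  have h := (plant (caterpillar L j)).two_mul_total_add_le
  have hleaf : (plant (caterpillar L j)).leafCount = L + j := by
    simp only [plant, leafCount, leafCount_caterpillar hL]
    omega
  have hsize : (plant (caterpillar L j)).size = L + 2 * j + 2 := by
    simp only [plant, size, size_caterpillar]
    omega
  rw [hleaf, hsize] at h
  linarith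

/-! ### Plane trees as graphs -/

/-- The vertices of a plane tree. -/
def Vert : PlaneTree → Type
  | single => Unit
  | graft t u => t.Vert ⊕ u.Vert

/-- The root of a plane tree. -/
def root : (t : PlaneTree) → t.Vert
  | single => ()
  | graft t _ => .inl t.root

/-- The underlying graph of a plane tree. -/
def graph : (t : PlaneTree) → SimpleGraph t.Vert
  | single => ⊥
  | graft t u => edgeJoin t.graph t.root u.graph u.root

instance : Unique single.Vert := inferInstanceAs (Unique Unit)

instance fintypeVert : (t : PlaneTree) → Fintype t.Vert
  | single => inferInstance
  | graft t u =>
    have := t.fintypeVert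
    have := u.fintypeVert
    inferInstanceAs (Fintype (t.Vert ⊕ u.Vert))

theorem card_vert (t : PlaneTree) : Fintype.card t.Vert = t.size := by
  induction t with
  | single => rfl
  | graft t u iht ihu => rw [size, ← iht, ← ihu]; exact Fintype.card_sum

theorem isTree_graph (t : PlaneTree) : t.graph.IsTree := by
  induction t with
  | single => exact .of_subsingleton
  | graft t u iht ihu => exact isTree_edgeJoin iht ihu

theorem card_neighborSet_root (t : PlaneTree) : Nat.card (t.graph.neighborSet t.root) = t.deg := by
  classical
  induction t with
  | single => simp [graph, deg]
  | graft t u iht _ =>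
    rw [deg, ← iht]
    exact (card_neighborSet_edgeJoin_inl _).trans (by rw [if_pos rfl])

theorem good_iff {t : PlaneTree} :
    t.Good ↔ ∀ v ≠ t.root, Nat.card (t.graph.neighborSet v) ≠ 2 := by
  classical
  induction t with
  | single => exact iff_of_true trivial fun v hv => absurd (Subsingleton.elim v _) hv
  | graft t u iht ihu =>
    have hl (x : t.Vert) (hx : x ≠ t.root) :
        Nat.card ((graft t u).graph.neighborSet (.inl x)) = Nat.card (t.graph.neighborSet x) :=
      (card_neighborSet_edgeJoin_inl x).trans (by rw [if_neg hx, add_zero])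
    have hr (x : u.Vert) (hx : x ≠ u.root) :
        Nat.card ((graft t u).graph.neighborSet (.inr x)) = Nat.card (u.graph.neighborSet x) :=
      (card_neighborSet_edgeJoin_inr x).trans (by rw [if_neg hx, add_zero])
    have hroot : Nat.card ((graft t u).graph.neighborSet (.inr u.root)) = u.deg + 1 :=
      (card_neighborSet_edgeJoin_inr _).trans (by rw [if_pos rfl, u.card_neighborSet_root])
    rw [Good, iht, ihu]
    constructor
    · rintro ⟨ht, hu, hd⟩ (x | x) hx
      · have hxr : x ≠ t.root := fun h => hx (congrArg Sum.inl h)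
        exact (hl x hxr).trans_ne (ht x hxr)
      · by_cases hxr : x = u.root
        · subst hxr
          exact hroot.trans_ne (by omega)
        · exact (hr x hxr).trans_ne (hu x hxr)
    · intro h
      refine ⟨fun x hx => (hl x hx).symm.trans_ne (h _ fun heq => hx (Sum.inl_injective heq)),
        fun x hx => (hr x hx).symm.trans_ne (h _ Sum.inr_ne_inl), fun hd => ?_⟩
      exact h (.inr u.root) Sum.inr_ne_inl (hroot.trans (by rw [hd]))

theorem rootedSubtreePoly_graft (t u : PlaneTree) :
    rootedSubtreePoly (graft t u).graph (graft t u).root =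
      rootedSubtreePoly t.graph t.root * (1 + rootedSubtreePoly u.graph u.root) :=
  rootedSubtreePoly_edgeJoin_inl

theorem subtreePoly_graft (t u : PlaneTree) :
    subtreePoly (graft t u).graph = subtreePoly t.graph + subtreePoly u.graph +
      rootedSubtreePoly t.graph t.root * rootedSubtreePoly u.graph u.root :=
  subtreePoly_edgeJoin

theorem eval_one_rootedSubtreePoly (t : PlaneTree) :
    (rootedSubtreePoly t.graph t.root).eval 1 = t.rootCount := by
  induction t with
  | single => rw [rootedSubtreePoly_of_unique, eval_X, rootCount]
  | graft t u iht ihu => simp [rootedSubtreePoly_graft, rootCount, iht, ihu]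

theorem eval_one_derivative_rootedSubtreePoly (t : PlaneTree) :
    (derivative (rootedSubtreePoly t.graph t.root)).eval 1 = t.rootTotal := by
  induction t with
  | single => rw [rootedSubtreePoly_of_unique, derivative_X, eval_one, rootTotal]
  | graft t u iht ihu =>
    simp [rootedSubtreePoly_graft, rootTotal, iht, ihu, eval_one_rootedSubtreePoly]

theorem numSubtrees_graph (t : PlaneTree) : numSubtrees t.graph = t.count := by
  rw [← eval_one_subtreePoly]
  induction t with
  | single => rw [subtreePoly_of_unique, eval_X, count]
  | graft t u iht ihu => simp [subtreePoly_graft, count, iht, ihu, eval_one_rootedSubtreePoly]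

theorem totalSubtreeOrder_graph (t : PlaneTree) : totalSubtreeOrder t.graph = t.total := by
  rw [← eval_one_derivative_subtreePoly]
  induction t with
  | single => rw [subtreePoly_of_unique, derivative_X, eval_one, total]
  | graft t u iht ihu =>
    simp [subtreePoly_graft, total, iht, ihu, eval_one_rootedSubtreePoly,
      eval_one_derivative_rootedSubtreePoly]

theorem subtreeDensity_graph (t : PlaneTree) :
    subtreeDensity t.graph = t.total / (t.count * t.size) := by
  rw [subtreeDensity, avgSubtreeOrder, totalSubtreeOrder_graph, numSubtrees_graph, card_vert,
    div_div]

theorem exists_graph_iso {V : Type*} [Finite V] {G : SimpleGraph V} (hG : G.IsTree) (r : V) :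
    ∃ (t : PlaneTree) (e : t.graph ≃g G), e t.root = r := by
  classical
  induction hn : Nat.card V using Nat.strong_induction_on generalizing V with
  | _ n ih =>
    subst hn
    rcases subsingleton_or_nontrivial V with hV | hV
    · refine ⟨single, ⟨⟨fun _ => r, fun _ => (), fun _ => rfl, fun _ => Subsingleton.elim _ _⟩, ?_⟩,
        rfl⟩
      simp [graph]
    · obtain ⟨w, hrw⟩ := hG.connected.preconnected.exists_adj_of_nontrivial r
      obtain ⟨s, hr, hw, hcut⟩ := exists_cut_of_isAcyclic hG.isAcyclic hrw
      let e := edgeJoinIsoOfCut hr hw hcut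
      obtain ⟨hs, hsc⟩ := connected_edgeJoin_iff.1 (e.connected_iff.2 hG.connected)
      obtain ⟨t, f, hf⟩ := ih _ (Finite.card_subtype_lt hw) ⟨hs, hG.isAcyclic.induce s⟩ ⟨r, hr⟩ rfl
      obtain ⟨u, g, hg⟩ := ih _ (Finite.card_subtype_lt (not_not.2 hr))
        ⟨hsc, hG.isAcyclic.induce sᶜ⟩ ⟨w, hw⟩ rfl
      exact ⟨graft t u, (edgeJoinCongr f g hf hg).trans e, congrArg (fun x : s => (x : V)) hf⟩

end PlaneTree

/-! ### Subtree densities of series-reduced trees -/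

theorem subtreeDensity_congr {V W : Type*} [Fintype V] [Fintype W] {G : SimpleGraph V}
    {H : SimpleGraph W} (e : G ≃g H) : subtreeDensity G = subtreeDensity H := by
  have hnum : numSubtrees G = numSubtrees H := by
    rw [← eval_one_subtreePoly, subtreePoly_congr e, eval_one_subtreePoly]
  have htotal : totalSubtreeOrder G = totalSubtreeOrder H := by
    rw [← eval_one_derivative_subtreePoly, subtreePoly_congr e, eval_one_derivative_subtreePoly]
  rw [subtreeDensity, subtreeDensity, avgSubtreeOrder, avgSubtreeOrder, hnum, htotal,
    Fintype.card_congr e.toEquiv]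

theorem seriesReduced_congr {V W : Type*} {G : SimpleGraph V} {H : SimpleGraph W} (e : G ≃g H) :
    SeriesReduced G ↔ SeriesReduced H :=
  e.toEquiv.forall_congr fun v => by rw [Nat.card_congr (e.mapNeighborSet v)]; rfl

namespace PlaneTree

theorem seriesReduced_graph_iff {t : PlaneTree} :
    SeriesReduced t.graph ↔ t.Good ∧ t.deg ≠ 2 := by
  rw [good_iff, ← t.card_neighborSet_root]
  refine ⟨fun h => ⟨fun v _ => h v, h _⟩, fun ⟨h, hroot⟩ v => ?_⟩
  by_cases hv : v = t.root
  · rwa [hv]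
  · exact h v hv

theorem Good.subtreeDensity_graph_mem_Icc {t : PlaneTree} (ht : t.Good) (hd : t.deg = 1) :
    subtreeDensity t.graph ∈ Set.Icc (1 / 2 : ℝ) (3 / 4) := by
  have hpos : (0 : ℝ) < t.count * t.size := by
    exact_mod_cast Nat.mul_pos (t.rootCount_pos.trans_le t.rootCount_le_count) t.size_pos
  have hlower : (t.size * t.count : ℝ) ≤ 2 * t.total := by
    exact_mod_cast sub_nonneg.1 (ht.excess_nonneg hd)
  have hupper : (4 * t.total : ℝ) ≤ 3 * t.size * t.count := by
    exact_mod_cast ht.four_mul_total_le hd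
  rw [subtreeDensity_graph, Set.mem_Icc, le_div_iff₀ hpos, div_le_iff₀ hpos]
  constructor <;> linarith

theorem abs_subtreeDensity_plant_caterpillar_sub_le {L : ℕ} (hL : 3 ≤ L) (j : ℕ) :
    |subtreeDensity (plant (caterpillar L j)).graph - (L + 3 * j) / (2 * (L + 2 * j + 2))| ≤
      3 / (L + 2 * j + 2) := by
  have hlower := two_mul_total_plant_caterpillar_ge hL j
  have hupper := two_mul_total_plant_caterpillar_le (by omega : 0 < L) j
  have hsize : (plant (caterpillar L j)).size = L + 2 * j + 2 := by
    simp only [plant, size, size_caterpillar]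
    omega
  rw [subtreeDensity_graph, hsize]
  have hcount : 0 < (plant (caterpillar L j)).count :=
    (rootCount_pos _).trans_le (rootCount_le_count _)
  generalize (plant (caterpillar L j)).count = N at *
  generalize (plant (caterpillar L j)).total = R at *
  have hN : (0 : ℝ) < N := by exact_mod_cast hcount
  have hlower' : (L + 3 * j : ℝ) * N ≤ 2 * R + 6 * N := by exact_mod_cast hlower
  have hupper' : (2 * R : ℝ) ≤ (L + 3 * j + 4) * N := by exact_mod_cast hupper
  have hn : (0 : ℝ) < L + 2 * j + 2 := by positivity
  push_cast
  have hdiff : (R / (N * (L + 2 * j + 2)) - (L + 3 * j) / (2 * (L + 2 * j + 2)) : ℝ) =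
      (2 * R - (L + 3 * j) * N) / (2 * N) / (L + 2 * j + 2) := by
    field_simp
  rw [hdiff, abs_div, abs_of_pos hn, div_le_div_iff_of_pos_right hn, abs_div,
    abs_of_pos (by positivity : (0 : ℝ) < 2 * N), div_le_iff₀ (by positivity), abs_le]
  constructor <;> linarith

theorem tendsto_subtreeDensity_plant_caterpillar {c : ℝ} (hc : c ∈ Set.Icc (0 : ℝ) 1) :
    Tendsto (fun m : ℕ => subtreeDensity
      (plant (caterpillar (2 * (m - ⌊c * m⌋₊) + 3) ⌊c * m⌋₊)).graph) atTop (𝓝 ((2 + c) / 4)) := by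
  have hinv : Tendsto (fun m : ℕ => (m : ℝ)⁻¹) atTop (𝓝 0) := tendsto_inv_atTop_nhds_zero_nat
  have hfloor : Tendsto (fun m : ℕ => (⌊c * m⌋₊ : ℝ) / m) atTop (𝓝 c) :=
    (tendsto_nat_floor_mul_div_atTop hc.1).comp tendsto_natCast_atTop_atTop
  have hmain : Tendsto (fun m : ℕ => (2 * m + ⌊c * m⌋₊ + 3 : ℝ) / (2 * (2 * m + 5))) atTop
      (𝓝 ((2 + c) / 4)) := by
    have := ((hfloor.const_add 2).add (hinv.const_mul 3)).div
      ((hinv.const_mul 10).const_add 4) (by norm_num)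
    simp only [mul_zero, add_zero] at this
    refine this.congr' ?_
    filter_upwards [eventually_gt_atTop 0] with m hm
    simp only [Pi.div_apply]
    field_simp
    ring
  have herror : Tendsto (fun m : ℕ => (3 : ℝ) / (2 * m + 5)) atTop (𝓝 0) := by
    have := (hinv.const_mul 3).div ((hinv.const_mul 5).const_add 2) (by norm_num)
    simp only [mul_zero, add_zero, zero_div] at this
    refine this.congr' ?_
    filter_upwards [eventually_gt_atTop 0] with m hm
    simp only [Pi.div_apply]
    field_simp
  refine (tendsto_iff_of_dist (squeeze_zero (fun _ => dist_nonneg) (fun m => ?_) herror)).2 hmain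
  have hk : ⌊c * m⌋₊ ≤ m := Nat.floor_le_of_le (mul_le_of_le_one_left m.cast_nonneg hc.2)
  have hsize : (↑(2 * (m - ⌊c * m⌋₊) + 3) + 2 * ⌊c * m⌋₊ + 2 : ℝ) = 2 * m + 5 := by
    push_cast [hk]
    ring
  have hnum : (↑(2 * (m - ⌊c * m⌋₊) + 3) + 3 * ⌊c * m⌋₊ : ℝ) = 2 * m + ⌊c * m⌋₊ + 3 := by
    push_cast [hk]
    ring
  rw [Real.dist_eq, ← hsize, ← hnum]
  exact abs_subtreeDensity_plant_caterpillar_sub_le (by omega) _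

end PlaneTree

theorem subtreeDensity_mem_Icc {V : Type*} [Fintype V] [Nontrivial V] {G : SimpleGraph V}
    (hG : G.IsTree) (hred : SeriesReduced G) :
    subtreeDensity G ∈ Set.Icc (1 / 2 : ℝ) (3 / 4) := by
  classical
  obtain ⟨r, hr⟩ := hG.exists_vert_degree_one_of_nontrivial
  obtain ⟨t, e, rfl⟩ := PlaneTree.exists_graph_iso hG r
  have hd : t.deg = 1 := by
    rw [← t.card_neighborSet_root, Nat.card_congr (e.mapNeighborSet _), Nat.card_eq_fintype_card,
      SimpleGraph.card_neighborSet_eq_degree, hr]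
  rw [← subtreeDensity_congr e]
  exact (PlaneTree.seriesReduced_graph_iff.1 ((seriesReduced_congr e).2 hred)).1
    |>.subtreeDensity_graph_mem_Icc hd

theorem PlaneTree.Good.exists_fin_graph {t : PlaneTree} (ht : t.Good) (hd : t.deg = 1) :
    ∃ (n : ℕ) (G : SimpleGraph (Fin n)), G.IsTree ∧ SeriesReduced G ∧ 2 ≤ n ∧
      subtreeDensity t.graph = subtreeDensity G := by
  let e := SimpleGraph.Iso.map (Fintype.equivFin t.Vert) t.graph
  refine ⟨_, _, e.isTree_iff.1 t.isTree_graph, (seriesReduced_congr e).1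
    (seriesReduced_graph_iff.2 ⟨ht, by omega⟩), ?_, subtreeDensity_congr e⟩
  obtain ⟨u, rfl⟩ := exists_eq_plant_of_deg_eq_one hd
  rw [card_vert]
  exact Nat.add_le_add_left u.size_pos 1

theorem stmt11 :
    (∀ (n : ℕ) (G : SimpleGraph (Fin n)), G.IsTree → SeriesReduced G → 2 ≤ n →
      subtreeDensity G ∈ Set.Icc (1 / 2 : ℝ) (3 / 4)) ∧
    closure {x : ℝ | ∃ (n : ℕ) (G : SimpleGraph (Fin n)), G.IsTree ∧ SeriesReduced G ∧
      2 ≤ n ∧ x = subtreeDensity G} = Set.Icc (1 / 2 : ℝ) (3 / 4) := by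
  have hmem (n : ℕ) (G : SimpleGraph (Fin n)) (hG : G.IsTree) (hred : SeriesReduced G)
      (hn : 2 ≤ n) : subtreeDensity G ∈ Set.Icc (1 / 2 : ℝ) (3 / 4) :=
    have : Nontrivial (Fin n) := Fin.nontrivial_iff_two_le.2 hn
    subtreeDensity_mem_Icc hG hred
  refine ⟨hmem, Set.Subset.antisymm (closure_minimal ?_ isClosed_Icc) fun x hx => ?_⟩
  · rintro _ ⟨n, G, hG, hred, hn, rfl⟩
    exact hmem n G hG hred hn
  · have hc : 4 * x - 2 ∈ Set.Icc (0 : ℝ) 1 := ⟨by linarith [hx.1], by linarith [hx.2]⟩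
    have hlim := PlaneTree.tendsto_subtreeDensity_plant_caterpillar hc
    rw [show (2 + (4 * x - 2)) / 4 = x by ring] at hlim
    exact mem_closure_of_tendsto hlim (.of_forall fun m =>
      (PlaneTree.good_plant_caterpillar (by omega) _).exists_fin_graph rfl)
end

section
/- The set of values {p(T,v) : T a finite tree, v a vertex of T} is dense in the interval [0,1]. -/
/-- `N(T,v)`: the number of subtrees containing the vertex `v`. -/
noncomputable def numSubtreesContaining {V : Type*} [Fintype V] (G : SimpleGraph V) (v : V) : ℕ :=
  Nat.card {S : Finset V // IsSubtree G S ∧ v ∈ S}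

/-- `p(T,v) = N(T,v)/N(T)`: the probability that a uniformly random subtree contains `v`. -/
noncomputable def subtreeProb {V : Type*} [Fintype V] (G : SimpleGraph V) (v : V) : ℝ :=
  (numSubtreesContaining G v : ℝ) / (numSubtrees G : ℝ)

/-!
Attach a leaf `ℓ` to a tree `T` at a vertex `v`. A subtree of the new tree either lies in `T`, or is
`{ℓ}`, or is `S ∪ {ℓ}` for a subtree `S` of `T` containing `v`. Hence, if `(a, N)` are the counts
`(N(T,v), N(T))`, the new tree has the counts `(a + 1, N + a + 1)` at `ℓ` and `(2a, N + a + 1)` at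
`v`. Starting from a single vertex, `n` steps of the first kind followed by `k` steps of the second
kind produce a broom with `p = (1 + n / 2 ^ (k + 1) + k / (2 ^ k * (n + 1)))⁻¹`. As `k → ∞` with
`n = ⌊c * 2 ^ (k + 1)⌋`, this tends to `1 / (1 + c)`, which is an arbitrary point of `(0, 1]`.
-/

open SimpleGraph Function

lemma setOf_finset_option_eq_union {α : Type*} (P : Finset (Option α) → Prop) :
    {S | P S} =
      Finset.map Embedding.some '' {S : Finset α | P (S.map Embedding.some)} ∪
        Finset.insertNone '' {S : Finset α | P S.insertNone} := by
  classical
  refine Set.Subset.antisymm (fun S (hS : P S) => ?_) ?_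
  · by_cases h : none ∈ S
    · have hS' : S.eraseNone.insertNone = S := by
        rw [Finset.insertNone_eraseNone, Finset.insert_eq_of_mem h]
      exact .inr ⟨S.eraseNone, by rwa [Set.mem_ofPred_eq, hS'], hS'⟩
    · have hS' : S.eraseNone.map Embedding.some = S := by
        rw [Finset.map_some_eraseNone, Finset.erase_eq_of_notMem h]
      exact .inl ⟨S.eraseNone, by rwa [Set.mem_ofPred_eq, hS'], hS'⟩
  · rintro _ (⟨S, hS, rfl⟩ | ⟨S, hS, rfl⟩) <;> exact hS

lemma ncard_setOf_finset_option {α : Type*} [Finite α] (P : Finset (Option α) → Prop) :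
    {S | P S}.ncard = {S : Finset α | P (S.map Embedding.some)}.ncard +
      {S : Finset α | P S.insertNone}.ncard := by
  have hdisj : Disjoint (Finset.map Embedding.some '' {S : Finset α | P (S.map Embedding.some)})
      (Finset.insertNone '' {S : Finset α | P S.insertNone}) := by
    rw [Set.disjoint_left]
    rintro _ ⟨S, -, rfl⟩ ⟨T, -, h⟩
    simpa using congrArg (none ∈ ·) h
  rw [setOf_finset_option_eq_union, Set.ncard_union_eq hdisj (Set.toFinite _) (Set.toFinite _),
    Set.ncard_image_of_injective _ (Finset.map_injective _),
    Set.ncard_image_of_injective _ Finset.insertNone.injective]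

section Subtree

variable {V W : Type*} {G : SimpleGraph V} {H : SimpleGraph W}

lemma isSubtree_iff_connected_of_range_eq (f : G ↪g H) {S : Finset W} (h : Set.range f = S) :
    IsSubtree H S ↔ G.Connected := by
  rw [f.isoInduceRange.connected_iff, h, IsSubtree, and_iff_right_of_imp]
  exact fun hS => Finset.coe_nonempty.1 (Set.nonempty_coe_sort.1 hS.nonempty)

lemma isSubtree_iff_connected_induce {S : Finset V} :
    IsSubtree G S ↔ (G.induce (S : Set V)).Connected :=
  isSubtree_iff_connected_of_range_eq (Embedding.induce _) Subtype.range_coe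

lemma isSubtree_map (f : G ↪g H) {S : Finset V} :
    IsSubtree H (S.map f.toEmbedding) ↔ IsSubtree G S := by
  rw [isSubtree_iff_connected_induce (G := G)]
  refine isSubtree_iff_connected_of_range_eq (f.comp (Embedding.induce _)) ?_
  ext
  simp

lemma isSubtree_singleton (v : V) : IsSubtree G {v} := by
  refine isSubtree_iff_connected_induce.2 ?_
  rw [Finset.coe_singleton]
  exact IsTree.of_subsingleton.connected

lemma isSubtree_iff_nonempty_of_subsingleton [Subsingleton V] {S : Finset V} :
    IsSubtree G S ↔ S.Nonempty := by
  refine ⟨And.left, fun ⟨v, hv⟩ => ?_⟩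
  rw [Finset.eq_singleton_iff_unique_mem.2 ⟨hv, fun w _ => Subsingleton.elim w v⟩]
  exact isSubtree_singleton v

variable [Fintype V] [Fintype W]

lemma numSubtrees_eq_ncard : numSubtrees G = {S | IsSubtree G S}.ncard := rfl

lemma numSubtreesContaining_eq_ncard (v : V) :
    numSubtreesContaining G v = {S | IsSubtree G S ∧ v ∈ S}.ncard := rfl

lemma subtreeProb_apply_iso (e : G ≃g H) (v : V) : subtreeProb H (e v) = subtreeProb G v := by
  have h (S : Finset V) : IsSubtree G S ↔ IsSubtree H (e.toEquiv.finsetCongr S) :=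
    (isSubtree_map (e : G ↪g H)).symm
  have hcontaining : numSubtreesContaining G v = numSubtreesContaining H (e v) :=
    Nat.card_congr (e.toEquiv.finsetCongr.subtypeEquiv fun S =>
      and_congr (h S) (Finset.mem_map' e.toEquiv.toEmbedding).symm)
  have htotal : numSubtrees G = numSubtrees H :=
    Nat.card_congr (e.toEquiv.finsetCongr.subtypeEquiv h)
  rw [subtreeProb, subtreeProb, hcontaining, htotal]

end Subtree

/-- The graph obtained from `G` by attaching a new leaf to `v`. The new leaf is `none`, and the old
vertices are embedded by `some`. -/
def addLeaf {V : Type*} (G : SimpleGraph V) (v : V) : SimpleGraph (Option V) :=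
  G.map Embedding.some ⊔ edge none (some v)

section AddLeaf

variable {V : Type*} {G : SimpleGraph V} {v : V}

@[simp]
lemma addLeaf_adj_some_some {a b : V} : (addLeaf G v).Adj (some a) (some b) ↔ G.Adj a b := by
  rw [addLeaf, sup_adj, SimpleGraph.map_adj]
  simp [edge_adj]

@[simp]
lemma addLeaf_adj_none_left {x : Option V} : (addLeaf G v).Adj none x ↔ x = some v := by
  rw [addLeaf, sup_adj, SimpleGraph.map_adj]
  cases x <;> simp [edge_adj]

@[simp]
lemma addLeaf_adj_none_right {x : Option V} : (addLeaf G v).Adj x none ↔ x = some v := by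
  rw [adj_comm, addLeaf_adj_none_left]

/-- The inclusion of `G` into the graph with a leaf attached. -/
def addLeafSome (G : SimpleGraph V) (v : V) : G ↪g addLeaf G v :=
  ⟨Embedding.some, addLeaf_adj_some_some⟩

/-- The inclusion of an induced subgraph containing `v`, with a leaf attached at `v`, into the whole
graph with a leaf attached at `v`. -/
def addLeafInduce (G : SimpleGraph V) {s : Set V} (v : s) :
    addLeaf (G.induce s) v ↪g addLeaf G v where
  toEmbedding := (Embedding.subtype _).optionMap
  map_rel_iff' {x y} := by cases x <;> cases y <;> simp [Subtype.ext_iff]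

-- The map collapsing the leaf onto `v` sends each edge to an edge or to a single vertex.
lemma reachable_getD_of_reachable_addLeaf {x y : Option V} (h : (addLeaf G v).Reachable x y) :
    G.Reachable (x.getD v) (y.getD v) := by
  rw [reachable_iff_reflTransGen] at h ⊢
  refine h.lift' (Option.getD · v) fun x y hxy => ?_
  rw [onFun_apply, ← reachable_iff_reflTransGen]
  rcases x with _ | x <;> rcases y with _ | y
  · rfl
  · simp_all
  · simp_all
  · exact (addLeaf_adj_some_some.1 hxy).reachable

lemma connected_addLeaf_iff : (addLeaf G v).Connected ↔ G.Connected := by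
  rw [connected_iff_exists_forall_reachable, connected_iff_exists_forall_reachable]
  constructor
  · rintro ⟨x, hx⟩
    exact ⟨x.getD v, fun w => reachable_getD_of_reachable_addLeaf (hx (some w))⟩
  · rintro ⟨u, hu⟩
    have hsome (w : V) : (addLeaf G v).Reachable (some u) (some w) :=
      (hu w).map (addLeafSome G v).toHom
    refine ⟨some u, Option.forall.2 ⟨?_, hsome⟩⟩
    exact (hsome v).trans (addLeaf_adj_none_right.2 rfl).reachable

lemma edgeSet_addLeaf :
    (addLeaf G v).edgeSet = insert s(none, some v) (Embedding.some.sym2Map '' G.edgeSet) := by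
  rw [addLeaf, edgeSet_sup, edgeSet_map, edgeSet_edge_of_ne (by simp), Set.union_comm]
  rfl

lemma card_edgeSet_addLeaf [Finite V] :
    Nat.card (addLeaf G v).edgeSet = Nat.card G.edgeSet + 1 := by
  have hnew : s(none, some v) ∉ Embedding.some.sym2Map '' G.edgeSet := by
    rintro ⟨e, -, he⟩
    induction e with | _ a b => simp at he
  rw [edgeSet_addLeaf, Nat.card_coe_set_eq, Set.ncard_insert_of_notMem hnew (Set.toFinite _),
    Set.ncard_image_of_injective _ Embedding.some.sym2Map.injective, ← Nat.card_coe_set_eq]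

lemma isTree_addLeaf_iff [Finite V] : (addLeaf G v).IsTree ↔ G.IsTree := by
  rw [isTree_iff_connected_and_card, isTree_iff_connected_and_card, connected_addLeaf_iff,
    card_edgeSet_addLeaf, Finite.card_option, add_left_inj]

lemma isSubtree_addLeaf_map_some {S : Finset V} :
    IsSubtree (addLeaf G v) (S.map Embedding.some) ↔ IsSubtree G S :=
  isSubtree_map (addLeafSome G v)

lemma isSubtree_addLeaf_insertNone_iff_of_mem {S : Finset V} (hv : v ∈ S) :
    IsSubtree (addLeaf G v) S.insertNone ↔ IsSubtree G S := by
  rw [isSubtree_iff_connected_induce (G := G),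
    ← connected_addLeaf_iff (v := (⟨v, hv⟩ : (S : Set V)))]
  refine isSubtree_iff_connected_of_range_eq (addLeafInduce G ⟨v, hv⟩) ?_
  ext (_ | x)
  · exact iff_of_true ⟨none, rfl⟩ (by simp)
  · simp [addLeafInduce, Option.exists]

lemma mem_of_isSubtree_addLeaf_insertNone {S : Finset V} (hS : S.Nonempty)
    (h : IsSubtree (addLeaf G v) S.insertNone) : v ∈ S := by
  obtain ⟨a, ha⟩ := hS
  have : Nontrivial (S.insertNone : Set (Option V)) :=
    ⟨⟨none, by simp⟩, ⟨some a, by simpa using ha⟩, by simp⟩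
  obtain ⟨⟨y, hy⟩, hadj⟩ := h.2.preconnected.exists_adj_of_nontrivial ⟨none, by simp⟩
  obtain rfl : y = some v := addLeaf_adj_none_left.1 hadj
  simpa using hy

lemma isSubtree_addLeaf_insertNone_iff {S : Finset V} :
    IsSubtree (addLeaf G v) S.insertNone ↔ S = ∅ ∨ IsSubtree G S ∧ v ∈ S := by
  rcases S.eq_empty_or_nonempty with rfl | hS
  · exact iff_of_true (isSubtree_singleton none) (.inl rfl)
  · rw [or_iff_right hS.ne_empty]
    refine ⟨fun h => ?_, fun ⟨h, hv⟩ => (isSubtree_addLeaf_insertNone_iff_of_mem hv).2 h⟩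
    have hv := mem_of_isSubtree_addLeaf_insertNone hS h
    exact ⟨(isSubtree_addLeaf_insertNone_iff_of_mem hv).1 h, hv⟩

variable [Fintype V]

lemma ncard_isSubtree_addLeaf_insertNone :
    {S : Finset V | IsSubtree (addLeaf G v) S.insertNone}.ncard =
      numSubtreesContaining G v + 1 := by
  have h : {S : Finset V | IsSubtree (addLeaf G v) S.insertNone} =
      insert ∅ {S | IsSubtree G S ∧ v ∈ S} := Set.ext fun _ => isSubtree_addLeaf_insertNone_iff
  rw [h, Set.ncard_insert_of_notMem (by simp) (Set.toFinite _), numSubtreesContaining_eq_ncard]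

lemma numSubtreesContaining_addLeaf_none :
    numSubtreesContaining (addLeaf G v) none = numSubtreesContaining G v + 1 := by
  rw [numSubtreesContaining_eq_ncard, ncard_setOf_finset_option,
    ← ncard_isSubtree_addLeaf_insertNone]
  simp

lemma numSubtreesContaining_addLeaf_some :
    numSubtreesContaining (addLeaf G v) (some v) = 2 * numSubtreesContaining G v := by
  have h (S : Finset V) : IsSubtree (addLeaf G v) S.insertNone ∧ v ∈ S ↔ IsSubtree G S ∧ v ∈ S :=
    and_congr_left isSubtree_addLeaf_insertNone_iff_of_mem
  rw [numSubtreesContaining_eq_ncard, ncard_setOf_finset_option, two_mul,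
    numSubtreesContaining_eq_ncard]
  simp [isSubtree_addLeaf_map_some, h]

lemma numSubtrees_addLeaf :
    numSubtrees (addLeaf G v) = numSubtrees G + (numSubtreesContaining G v + 1) := by
  rw [numSubtrees_eq_ncard, ncard_setOf_finset_option, ncard_isSubtree_addLeaf_insertNone,
    numSubtrees_eq_ncard]
  simp only [isSubtree_addLeaf_map_some]

end AddLeaf

/-- Some finite tree `T` and vertex `v` have `N(T,v) = a` and `N(T) = N`. Attaching leaves acts
on such pairs of numbers, so trees can be grown without tracking their vertex types. -/
def IsRootedTreeCount (a N : ℕ) : Prop :=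
  ∃ (V : Type) (_ : Fintype V) (G : SimpleGraph V) (v : V),
    G.IsTree ∧ numSubtreesContaining G v = a ∧ numSubtrees G = N

namespace IsRootedTreeCount

lemma one_one : IsRootedTreeCount 1 1 := by
  have h (S : Finset Unit) : IsSubtree ⊥ S ↔ S = {()} := by
    rw [isSubtree_iff_nonempty_of_subsingleton, Finset.nonempty_iff_eq_singleton_default]
  refine ⟨Unit, inferInstance, ⊥, (), .of_subsingleton, ?_, ?_⟩
  · rw [numSubtreesContaining_eq_ncard, Set.ncard_eq_one]
    exact ⟨{()}, by ext; simp +contextual [h]⟩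
  · rw [numSubtrees_eq_ncard, Set.ncard_eq_one]
    exact ⟨{()}, by ext; simp [h]⟩

variable {a N : ℕ}

lemma addLeaf_none (h : IsRootedTreeCount a N) :
    IsRootedTreeCount (a + 1) (N + (a + 1)) := by
  obtain ⟨V, _, G, v, hG, rfl, rfl⟩ := h
  exact ⟨Option V, inferInstance, addLeaf G v, none, isTree_addLeaf_iff.2 hG,
    numSubtreesContaining_addLeaf_none, numSubtrees_addLeaf⟩

lemma addLeaf_some (h : IsRootedTreeCount a N) :
    IsRootedTreeCount (2 * a) (N + (a + 1)) := by
  obtain ⟨V, _, G, v, hG, rfl, rfl⟩ := h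
  exact ⟨Option V, inferInstance, addLeaf G v, some v, isTree_addLeaf_iff.2 hG,
    numSubtreesContaining_addLeaf_some, numSubtrees_addLeaf⟩

lemma path (n : ℕ) : IsRootedTreeCount (n + 1) ((n + 2).choose 2) := by
  induction n with
  | zero => exact one_one
  | succ n ih =>
    rw [Nat.choose_succ_succ' (n + 2) 1, Nat.choose_one_right, add_comm (n + 2)]
    exact ih.addLeaf_none

lemma broom (n k : ℕ) :
    IsRootedTreeCount (2 ^ k * (n + 1)) (2 ^ k * (n + 1) + (n + 1).choose 2 + k) := by
  induction k with
  | zero =>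
    have h := path n
    rw [Nat.choose_succ_succ' (n + 1) 1, Nat.choose_one_right] at h
    simpa using h
  | succ k ih =>
    convert ih.addLeaf_some using 1 <;> ring

end IsRootedTreeCount

/-- The set of all values `p(T,v)`. Every finite tree is isomorphic to one on some `Fin n`, so these
trees suffice. -/
def subtreeProbs : Set ℝ :=
  {x : ℝ | ∃ (n : ℕ) (G : SimpleGraph (Fin n)) (v : Fin n), G.IsTree ∧ x = subtreeProb G v}

lemma subtreeProb_mem_subtreeProbs {V : Type*} [Fintype V] {G : SimpleGraph V} (hG : G.IsTree)
    (v : V) : subtreeProb G v ∈ subtreeProbs := by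
  let e := G.overFinIso rfl
  exact ⟨_, _, e v, e.isTree_iff.1 hG, (subtreeProb_apply_iso e v).symm⟩

lemma IsRootedTreeCount.div_mem_subtreeProbs {a N : ℕ} (h : IsRootedTreeCount a N) :
    (a / N : ℝ) ∈ subtreeProbs := by
  obtain ⟨V, _, G, v, hG, rfl, rfl⟩ := h
  exact subtreeProb_mem_subtreeProbs hG v

lemma broom_mem_subtreeProbs (n k : ℕ) :
    (1 + (n / 2 ^ (k + 1) + k / (2 ^ k * (n + 1))) : ℝ)⁻¹ ∈ subtreeProbs := by
  have hratio : (1 + (n / 2 ^ (k + 1) + k / (2 ^ k * (n + 1))) : ℝ) =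
      (2 ^ k * (n + 1) + (n + 1).choose 2 + k : ℕ) / (2 ^ k * (n + 1) : ℕ) := by
    push_cast [Nat.cast_choose_two]
    field_simp
    ring
  rw [hratio, inv_div]
  exact (IsRootedTreeCount.broom n k).div_mem_subtreeProbs

open Filter Topology

lemma tendsto_self_div_two_pow_mul_add_one (n : ℕ → ℕ) :
    Tendsto (fun k => (k / (2 ^ k * (n k + 1)) : ℝ)) atTop (𝓝 0) := by
  have h : Tendsto (fun k : ℕ => (k / 2 ^ k : ℝ)) atTop (𝓝 0) := by
    simpa using tendsto_pow_const_div_const_pow_of_one_lt 1 (one_lt_two (α := ℝ))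
  refine squeeze_zero (fun k => by positivity) (fun k => ?_) h
  gcongr
  exact le_mul_of_one_le_right (by positivity) (by simp)

lemma tendsto_floor_mul_two_pow_div {c : ℝ} (hc : 0 ≤ c) :
    Tendsto (fun k : ℕ => (⌊c * 2 ^ (k + 1)⌋₊ / 2 ^ (k + 1) : ℝ)) atTop (𝓝 c) :=
  (tendsto_nat_floor_mul_div_atTop hc).comp <|
    (tendsto_pow_atTop_atTop_of_one_lt one_lt_two).comp (tendsto_add_atTop_nat 1)

lemma inv_one_add_mem_closure_subtreeProbs {c : ℝ} (hc : 0 ≤ c) :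
    (1 + c)⁻¹ ∈ closure subtreeProbs := by
  have hlim := (tendsto_floor_mul_two_pow_div hc).add
    (tendsto_self_div_two_pow_mul_add_one fun k => ⌊c * 2 ^ (k + 1)⌋₊)
  rw [add_zero] at hlim
  exact mem_closure_of_tendsto ((hlim.const_add 1).inv₀ (by positivity))
    (.of_forall fun k => broom_mem_subtreeProbs _ k)

theorem stmt12 :
    Set.Icc (0 : ℝ) 1 ⊆
      closure {x : ℝ | ∃ (n : ℕ) (G : SimpleGraph (Fin n)) (v : Fin n),
        G.IsTree ∧ x = subtreeProb G v} := by
  change Set.Icc 0 1 ⊆ closure subtreeProbs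
  rw [← closure_Ioo zero_ne_one]
  refine closure_minimal (fun x hx => ?_) isClosed_closure
  have hinv : 0 ≤ x⁻¹ - 1 := sub_nonneg.2 ((one_le_inv₀ hx.1).2 hx.2.le)
  simpa using inv_one_add_mem_closure_subtreeProbs hinv
end
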